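/- Let x ∈ Σ = {0,1}^ℕ, ℓ ≥ 1 and n ≥ 2 be integers, and ε = 2^{-h} with h ∈ ℕ. Then N_ℓ(x,n,ε) = N_{ℓ+h−1}(x,n+h−1,ε₀); P_ℓ(x,n,ε) = θ·P_{ℓ+h−1}(x,n+h−1,ε₀); P≥_ℓ(x,n,ε) = θ·P≥_{ℓ+h−1}(x,n+h−1,ε₀); and RR_ℓ(x,n,ε) = θ·[RR_{ℓ+h−1}(x,n+h−1,ε₀) − (h−1)·P≥_{ℓ+h−1}(x,n+h−1,ε₀)], where θ = ((n+h−1)² − (n+h−1))/(n² − n) and ε₀ = 1/2. -/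

import Mathlib

open Filter Topology MeasureTheory

namespace RQA

/-- The standard metric on symbolic sequences over an alphabet `α`:
`ρ(x,y) = 2^{-min{i : x i ≠ y i}}` for `x ≠ y` and `ρ(x,x) = 0`. -/
noncomputable def seqDist {α : Type*} (x y : ℕ → α) : ℝ :=
  haveI := Classical.propDecidable (x = y)
  if x = y then 0 else (2 : ℝ) ^ (-((sInf {i : ℕ | x i ≠ y i} : ℕ) : ℤ))

/-- The (one-sided) shift on sequences. -/
def shift {α : Type*} (x : ℕ → α) : ℕ → α := fun i => x (i + 1)

/-- The embedded sequence `x^{(m)}`, a sequence over the alphabet `α^m`. -/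
def embedSeq {α : Type*} (m : ℕ) (x : ℕ → α) : ℕ → (Fin m → α) :=
  fun j t => x (j + (t : ℕ))

section RQAdefs

variable {X : Type*} (d : X → X → ℝ) (f : X → X) (x : X)

/-- The entry of the recurrence plot at `(i,j)` equals `1`. -/
def RPone (ε : ℝ) (i j : ℕ) : Prop := d (f^[i] x) (f^[j] x) ≤ ε

/-- `(i, j, l)` is a diagonal line in the recurrence plot `RP(x, n, ε)`. -/
def IsLine (n : ℕ) (ε : ℝ) (i j l : ℕ) : Prop :=
  1 ≤ l ∧ i + l ≤ n ∧ j + l ≤ n ∧ i ≠ j ∧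
  (∀ h, h < l → RPone d f x ε (i + h) (j + h)) ∧
  (0 < i → 0 < j → ¬ RPone d f x ε (i - 1) (j - 1)) ∧
  (max i j + l < n → ¬ RPone d f x ε (i + l) (j + l))

/-- `N_l(x, n, ε)`: the number of diagonal lines of length exactly `l`. -/
noncomputable def Nlines (n : ℕ) (ε : ℝ) (l : ℕ) : ℕ :=
  Set.ncard {p : ℕ × ℕ | IsLine d f x n ε p.1 p.2 l}

/-- `P_l(x, n, ε) = N_l/(n² − n)`. -/
noncomputable def Pline (n : ℕ) (ε : ℝ) (l : ℕ) : ℝ :=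
  (Nlines d f x n ε l : ℝ) / ((n : ℝ) ^ 2 - (n : ℝ))

/-- `P≥_ℓ(x, n, ε) = Σ_{l ≥ ℓ} P_l`. -/
noncomputable def PlineGe (n : ℕ) (ε : ℝ) (ℓ : ℕ) : ℝ :=
  ∑' k : ℕ, Pline d f x n ε (ℓ + k)

/-- The recurrence rate `RR_ℓ(x, n, ε) = Σ_{l ≥ ℓ} l · P_l`. -/
noncomputable def RRate (n : ℕ) (ε : ℝ) (ℓ : ℕ) : ℝ :=
  ∑' k : ℕ, ((ℓ + k : ℕ) : ℝ) * Pline d f x n ε (ℓ + k)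

/-- The determinism `DET_ℓ(x, n, ε) = RR_ℓ/RR_1`. -/
noncomputable def DETrm (n : ℕ) (ε : ℝ) (ℓ : ℕ) : ℝ :=
  RRate d f x n ε ℓ / RRate d f x n ε 1

/-- The average line length `L_ℓ(x, n, ε) = RR_ℓ/P≥_ℓ`. -/
noncomputable def LAvg (n : ℕ) (ε : ℝ) (ℓ : ℕ) : ℝ :=
  RRate d f x n ε ℓ / PlineGe d f x n ε ℓ

/-- The entropy of line lengths
`ENT_ℓ(x, n, ε) = log P≥_ℓ − (1/P≥_ℓ)·Σ_{l≥ℓ} P_l · log P_l` (with `0·log 0 = 0`). -/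
noncomputable def ENTln (n : ℕ) (ε : ℝ) (ℓ : ℕ) : ℝ :=
  Real.log (PlineGe d f x n ε ℓ) -
    (PlineGe d f x n ε ℓ)⁻¹ *
      ∑' k : ℕ, Pline d f x n ε (ℓ + k) * Real.log (Pline d f x n ε (ℓ + k))

/-- The correlation sum
`C_ℓ(x, n, ε) = n^{-2}·#{(i,j) ∈ [0,n)² : d_ℓ(f^i x, f^j x) ≤ ε}`,
where `d_ℓ` is the Bowen metric. -/
noncomputable def corrSum (ℓ n : ℕ) (ε : ℝ) : ℝ :=
  (Set.ncard {p : ℕ × ℕ | p.1 < n ∧ p.2 < n ∧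
      ∀ k, k < ℓ → d (f^[p.1 + k] x) (f^[p.2 + k] x) ≤ ε} : ℝ) / (n : ℝ) ^ 2

end RQAdefs

/-- The extension of a substitution to a morphism of the free monoid of finite words. -/
def substWord (ζ : Bool → List Bool) : List Bool → List Bool :=
  fun w => w.foldr (fun a r => ζ a ++ r) []

/-- `ζ` is a (binary) substitution of constant length `q ≥ 2`. -/
def IsConstLenSubst (ζ : Bool → List Bool) (q : ℕ) : Prop :=
  2 ≤ q ∧ ∀ a : Bool, (ζ a).length = q

/-- The language `L_ζ`: subwords of the words `ζ^k(a)`, `a ∈ A`, `k ≥ 1`. -/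
def substLang (ζ : Bool → List Bool) : Set (List Bool) :=
  {w | ∃ a : Bool, ∃ k : ℕ, 1 ≤ k ∧ w <:+: (substWord ζ)^[k] [a]}

/-- The substitution subshift `X_ζ`. -/
def SubstShift (ζ : Bool → List Bool) : Set (ℕ → Bool) :=
  {y | ∀ n : ℕ, (List.ofFn fun t : Fin n => y (t : ℕ)) ∈ substLang ζ}

/-- `ζ` is primitive. -/
def IsPrimitive (ζ : Bool → List Bool) : Prop :=
  ∃ k : ℕ, 1 ≤ k ∧ ∀ a b : Bool, b ∈ (substWord ζ)^[k] [a]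

/-- `ζ` is aperiodic: `X_ζ` contains a non-periodic sequence. -/
def IsAperiodic (ζ : Bool → List Bool) : Prop :=
  ∃ y ∈ SubstShift ζ, ∀ p : ℕ, 1 ≤ p → ∃ i : ℕ, y (i + p) ≠ y i

/-- The action of a constant length-`q` substitution on infinite sequences. -/
def substSeq (ζ : Bool → List Bool) (q : ℕ) (x : ℕ → Bool) : ℕ → Bool :=
  fun i => (ζ (x (i / q))).getD (i % q) false

/-- `(i, j, l)` is a line in the infinite symbolic recurrence plot `RP(x, ∞, ε₀)`. -/
def IsInfLine (x : ℕ → Bool) (i j l : ℕ) : Prop :=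
  1 ≤ l ∧ i ≠ j ∧ (∀ h, h < l → x (i + h) = x (j + h)) ∧
  (0 < i → 0 < j → x (i - 1) ≠ x (j - 1)) ∧ x (i + l) ≠ x (j + l)

/-- `K_l`: the set of starting points `(i,j)`, `i,j ≥ 1`, of inner lines of length `l`
in the infinite symbolic recurrence plot. -/
def Kset (x : ℕ → Bool) (l : ℕ) : Set (ℕ × ℕ) :=
  {p | 1 ≤ p.1 ∧ 1 ≤ p.2 ∧ IsInfLine x p.1 p.2 l}

/-- `#(M ∩ [0,n)²)/n²`. -/
noncomputable def densCount (M : Set (ℕ × ℕ)) (n : ℕ) : ℝ :=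
  (Set.ncard (M ∩ {p : ℕ × ℕ | p.1 < n ∧ p.2 < n}) : ℝ) / (n : ℝ) ^ 2

/-- `M ⊆ ℕ²` has asymptotic density `a`. -/
def HasDens (M : Set (ℕ × ℕ)) (a : ℝ) : Prop :=
  Tendsto (densCount M) atTop (𝓝 a)

/-- `δ_l(n) = #(K_l ∩ [1,n)²)/(n² − n)`. -/
noncomputable def deltaK (x : ℕ → Bool) (l n : ℕ) : ℝ :=
  (Set.ncard (Kset x l ∩ {p : ℕ × ℕ | p.1 < n ∧ p.2 < n}) : ℝ) / ((n : ℝ) ^ 2 - (n : ℝ))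

/-- `M` is a minimal subset of the subshift `Y`. -/
def IsMinimalSubset (Y M : Set (ℕ → Bool)) : Prop :=
  M ⊆ Y ∧ M.Nonempty ∧ IsClosed M ∧ (∀ z ∈ M, shift z ∈ M) ∧
  ∀ M' : Set (ℕ → Bool), M' ⊆ M → M'.Nonempty → IsClosed M' →
    (∀ z ∈ M', shift z ∈ M') → M' = M

end RQA

open RQA

theorem seqDist_le_iff (x y : ℕ → Bool) (h : ℕ) :
    seqDist x y ≤ (2:ℝ) ^ (-(h:ℤ)) ↔ ∀ t, t < h → x t = y t := by
  unfold seqDist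
  split_ifs with hxy
  · subst hxy
    simp only [implies_true, iff_true]
    positivity
  · have hne : {i : ℕ | x i ≠ y i}.Nonempty := by
      by_contra hc
      apply hxy
      funext i
      by_contra hi
      exact hc ⟨i, hi⟩
    rw [zpow_le_zpow_iff_right₀ (by norm_num : (1:ℝ) < 2)]
    constructor
    · intro hle t ht
      by_contra hc
      have : sInf {i : ℕ | x i ≠ y i} ≤ t := Nat.sInf_le hc
      omega
    · intro hall
      have hm := Nat.sInf_mem hne
      have : ¬ sInf {i : ℕ | x i ≠ y i} < h := fun hlt => hm (hall _ hlt)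
      omega

theorem shift_iter (x : ℕ → Bool) (i t : ℕ) : (shift^[i] x) t = x (i + t) := by
  induction i generalizing x with
  | zero => simp
  | succ k ih =>
    rw [Function.iterate_succ_apply, ih]
    simp only [shift]
    congr 1
    omega

theorem RPone_iff (x : ℕ → Bool) (h i j : ℕ) :
    RPone seqDist shift x ((2:ℝ) ^ (-(h:ℤ))) i j ↔ ∀ t, t < h → x (i + t) = x (j + t) := by
  unfold RPone
  rw [seqDist_le_iff]
  simp only [shift_iter]

theorem RPone_half_iff (x : ℕ → Bool) (i j : ℕ) :
    RPone seqDist shift x (1/2 : ℝ) i j ↔ x i = x j := by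
  have := RPone_iff x 1 i j
  have e : (2:ℝ) ^ (-((1:ℕ):ℤ)) = 1/2 := by norm_num
  rw [e] at this
  rw [this]
  simp

theorem isLine_iff (x : ℕ → Bool) (l n h i j : ℕ) (hl : 1 ≤ l) (hh : 1 ≤ h) :
    IsLine seqDist shift x n ((2:ℝ) ^ (-(h:ℤ))) i j l ↔
    IsLine seqDist shift x (n + h - 1) (1/2 : ℝ) i j (l + h - 1) := by
  unfold IsLine
  simp only [RPone_iff, RPone_half_iff]
  have key : (∀ k, k < l → ∀ t, t < h → x (i + k + t) = x (j + k + t)) ↔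
      ∀ k, k < l + h - 1 → x (i + k) = x (j + k) := by
    constructor
    · intro H k hk
      by_cases hkl : k < l
      · simpa using H k hkl 0 (by omega)
      · have := H (l - 1) (by omega) (k - (l - 1)) (by omega)
        rwa [show i + (l - 1) + (k - (l - 1)) = i + k by omega,
          show j + (l - 1) + (k - (l - 1)) = j + k by omega] at this
    · intro H k hk t ht
      have := H (k + t) (by omega)
      rwa [← add_assoc, ← add_assoc] at this
  rw [key]
  have start (H : ∀ k, k < l + h - 1 → x (i + k) = x (j + k)) (hi : 0 < i) (hj : 0 < j) :
      (∀ t, t < h → x (i - 1 + t) = x (j - 1 + t)) ↔ x (i - 1) = x (j - 1) := by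
    constructor
    · intro G
      simpa using G 0 (by omega)
    · intro G t ht
      rcases t with _ | t
      · simpa using G
      · have := H t (by omega)
        rwa [show i - 1 + (t + 1) = i + t by omega, show j - 1 + (t + 1) = j + t by omega]
  have fin (H : ∀ k, k < l + h - 1 → x (i + k) = x (j + k)) :
      (∀ t, t < h → x (i + l + t) = x (j + l + t)) ↔
        x (i + (l + h - 1)) = x (j + (l + h - 1)) := by
    constructor
    · intro G
      have := G (h - 1) (by omega)
      rwa [show i + l + (h - 1) = i + (l + h - 1) by omega,
        show j + l + (h - 1) = j + (l + h - 1) by omega] at this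
    · intro G t ht
      rw [add_assoc, add_assoc]
      by_cases htt : t = h - 1
      · rwa [show l + t = l + h - 1 by omega]
      · exact H (l + t) (by omega)
  constructor
  · rintro ⟨a, b, c, d, H, e, f⟩
    refine ⟨by omega, by omega, by omega, d, H, fun hi hj => ?_, fun hm => ?_⟩
    · rw [← start H hi hj]; exact e hi hj
    · rw [← fin H]; exact f (by omega)
  · rintro ⟨a, b, c, d, H, e, f⟩
    refine ⟨by omega, by omega, by omega, d, H, fun hi hj => ?_, fun hm => ?_⟩
    · rw [start H hi hj]; exact e hi hj
    · rw [fin H]; exact f (by omega)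

theorem Nlines_eq (x : ℕ → Bool) (l n h : ℕ) (hl : 1 ≤ l) (hh : 1 ≤ h) :
    Nlines seqDist shift x n ((2:ℝ) ^ (-(h:ℤ))) l
      = Nlines seqDist shift x (n + h - 1) (1/2 : ℝ) (l + h - 1) := by
  unfold Nlines
  simp only [isLine_iff x l n h _ _ hl hh]

theorem Pline_eq (x : ℕ → Bool) (l n h : ℕ) (hl : 1 ≤ l) (hn : 2 ≤ n) (hh : 1 ≤ h) :
    Pline seqDist shift x n ((2:ℝ) ^ (-(h:ℤ))) l
      = (((n + h - 1 : ℕ) : ℝ) ^ 2 - ((n + h - 1 : ℕ) : ℝ)) / ((n : ℝ) ^ 2 - (n : ℝ))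
        * Pline seqDist shift x (n + h - 1) (1/2 : ℝ) (l + h - 1) := by
  unfold Pline
  rw [Nlines_eq x l n h hl hh]
  have hM : (2:ℝ) ≤ ((n + h - 1 : ℕ) : ℝ) := by
    exact_mod_cast (by omega : 2 ≤ n + h - 1)
  have hM' : ((n + h - 1 : ℕ) : ℝ) ^ 2 - ((n + h - 1 : ℕ) : ℝ) ≠ 0 := by nlinarith
  rw [div_mul_div_comm, mul_comm (((n:ℝ)) ^ 2 - n), mul_div_mul_left _ _ hM']

theorem Pline_zero (x : ℕ → Bool) (n l : ℕ) (ε : ℝ) (hl : n < l) :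
    Pline seqDist shift x n ε l = 0 := by
  have : {p : ℕ × ℕ | IsLine seqDist shift x n ε p.1 p.2 l} = ∅ := by
    ext p
    simp only [Set.mem_setOf_eq, Set.mem_empty_iff_false, iff_false]
    rintro ⟨_, b, _⟩
    omega
  unfold Pline Nlines
  rw [this]
  simp

theorem summable_aux (x : ℕ → Bool) (n l : ℕ) (ε : ℝ) (c : ℕ → ℝ) :
    Summable fun k => c k * Pline seqDist shift x n ε (l + k) := by
  apply summable_of_ne_finset_zero (s := Finset.range (n + 1))
  intro k hk
  rw [Finset.mem_range] at hk
  rw [Pline_zero x n (l + k) ε (by omega), mul_zero]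

/-- recurrence quantifiers for threshold ε = 2^{-h} in terms of those of
the symbolic recurrence plot (ε₀ = 1/2), with θ = ((n+h−1)² − (n+h−1))/(n² − n). -/
theorem quantifiers_general_eps
    (x : ℕ → Bool) (ℓ n h : ℕ) (hℓ : 1 ≤ ℓ) (hn : 2 ≤ n) (hh : 1 ≤ h) :
    Nlines seqDist shift x n ((2:ℝ) ^ (-(h:ℤ))) ℓ
      = Nlines seqDist shift x (n + h - 1) (1/2 : ℝ) (ℓ + h - 1) ∧
    Pline seqDist shift x n ((2:ℝ) ^ (-(h:ℤ))) ℓ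
      = (((n + h - 1 : ℕ) : ℝ) ^ 2 - ((n + h - 1 : ℕ) : ℝ)) / ((n : ℝ) ^ 2 - (n : ℝ))
        * Pline seqDist shift x (n + h - 1) (1/2 : ℝ) (ℓ + h - 1) ∧
    PlineGe seqDist shift x n ((2:ℝ) ^ (-(h:ℤ))) ℓ
      = (((n + h - 1 : ℕ) : ℝ) ^ 2 - ((n + h - 1 : ℕ) : ℝ)) / ((n : ℝ) ^ 2 - (n : ℝ))
        * PlineGe seqDist shift x (n + h - 1) (1/2 : ℝ) (ℓ + h - 1) ∧
    RRate seqDist shift x n ((2:ℝ) ^ (-(h:ℤ))) ℓ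
      = (((n + h - 1 : ℕ) : ℝ) ^ 2 - ((n + h - 1 : ℕ) : ℝ)) / ((n : ℝ) ^ 2 - (n : ℝ))
        * (RRate seqDist shift x (n + h - 1) (1/2 : ℝ) (ℓ + h - 1)
            - ((h : ℝ) - 1) * PlineGe seqDist shift x (n + h - 1) (1/2 : ℝ) (ℓ + h - 1)) := by
  have hP : ∀ k, Pline seqDist shift x n ((2:ℝ) ^ (-(h:ℤ))) (ℓ + k) = _ :=
    fun k => Pline_eq x (ℓ + k) n h (by omega) hn hh
  have hidx : ∀ k, ℓ + k + h - 1 = ℓ + h - 1 + k := fun k => by omega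
  simp only [hidx] at hP
  refine ⟨Nlines_eq x ℓ n h hℓ hh, Pline_eq x ℓ n h hℓ hn hh, ?_, ?_⟩
  · unfold PlineGe
    simp only [hP]
    rw [tsum_mul_left]
  · unfold RRate PlineGe
    simp only [hP]
    rw [← tsum_mul_left (a := (h:ℝ) - 1),
      ← (summable_aux x _ _ _ _).tsum_sub (summable_aux x _ _ _ (fun _ => (h:ℝ) - 1)),
      ← tsum_mul_left]
    refine tsum_congr fun k => ?_
    have : ((ℓ + h - 1 + k : ℕ) : ℝ) = ((ℓ + k : ℕ) : ℝ) + ((h:ℝ) - 1) := by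
      rw [eq_comm, ← eq_sub_iff_add_eq', sub_eq_sub_iff_add_eq_add] 
      exact_mod_cast (by omega : h + (ℓ + k) = ℓ + h - 1 + k + 1)
    rw [this]
    ring
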